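/- (Fibonacci single-qubit Yang–Baxter equation.) The Fibonacci braid matrices satisfy R₁ * R₂ * R₁ = R₂ * R₁ * R₂. -/

import Mathlib

/-!
Write `t = φ⁻¹`, `s = φ^(-1/2)` and `w = exp(7πI/5)`, so that `R₁ = a • D` with `D = diag(1, w)`.
Since `F² = 1`, the claim is equivalent to `(D F)³ = (F D)³`. The matrix `D F` has trace `t (1 - w)`
and determinant `-w`, so by Cayley–Hamilton its cube is scalar (and hence equal to its conjugate
`(F D)³`) as soon as `t² (1 - w)² = -w`. This follows from the three relations `s² = t`,
`t² + t = 1` and `w² + t w + 1 = 0`, the last of which says `2 cos (7π/5) = -φ⁻¹`. The entrywise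
identity is checked from these relations in `braid_of_relations`.
-/

open Matrix Complex

/-- The golden ratio `φ = (1+√5)/2`. -/
noncomputable def phi : ℝ := (1 + Real.sqrt 5) / 2

/-- The Fibonacci F-matrix `F = !![φ⁻¹, φ^(-1/2); φ^(-1/2), -φ⁻¹]`. -/
noncomputable def Fm : Matrix (Fin 2) (Fin 2) ℂ :=
  !![((phi⁻¹ : ℝ) : ℂ), ((phi ^ (-(1 : ℝ) / 2) : ℝ) : ℂ);
     ((phi ^ (-(1 : ℝ) / 2) : ℝ) : ℂ), -((phi⁻¹ : ℝ) : ℂ)]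

/-- The Fibonacci braid matrix `R₁ = exp(-4πI/5) • !![1, 0; 0, exp(7πI/5)]`. -/
noncomputable def R1 : Matrix (Fin 2) (Fin 2) ℂ :=
  Complex.exp (-4 * (Real.pi : ℂ) * Complex.I / 5) •
    !![1, 0; 0, Complex.exp (7 * (Real.pi : ℂ) * Complex.I / 5)]

/-- The Fibonacci braid matrix `R₂ = F * R₁ * F`. -/
noncomputable def R2 : Matrix (Fin 2) (Fin 2) ℂ := Fm * R1 * Fm

lemma phi_pos : 0 < phi := by
  unfold phi; positivity

lemma phi_inv_eq : phi⁻¹ = (Real.sqrt 5 - 1) / 2 := by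
  have h5 : Real.sqrt 5 ^ 2 = 5 := Real.sq_sqrt (by norm_num)
  apply inv_eq_of_mul_eq_one_right
  unfold phi
  linear_combination h5 / 4

lemma phi_inv_sq_add : phi⁻¹ ^ 2 + phi⁻¹ = 1 := by
  have h5 : Real.sqrt 5 ^ 2 = 5 := Real.sq_sqrt (by norm_num)
  rw [phi_inv_eq]
  linear_combination h5 / 4

lemma phi_rpow_sq : (phi ^ (-(1 : ℝ) / 2)) ^ 2 = phi⁻¹ := by
  rw [← Real.rpow_natCast, ← Real.rpow_mul phi_pos.le, ← Real.rpow_neg_one]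
  norm_num

lemma two_cos_seven_pi_div_five : 2 * Real.cos (7 * Real.pi / 5) = -phi⁻¹ := by
  have h5 : Real.sqrt 5 ^ 2 = 5 := Real.sq_sqrt (by norm_num)
  have h : 7 * Real.pi / 5 = 2 * (Real.pi / 5) + Real.pi := by ring
  rw [h, Real.cos_add_pi, Real.cos_two_mul, Real.cos_pi_div_five, phi_inv_eq]
  linear_combination -h5 / 4

lemma exp_relation :
    Complex.exp (7 * (Real.pi : ℂ) * Complex.I / 5) ^ 2
      + ((phi⁻¹ : ℝ) : ℂ) * Complex.exp (7 * (Real.pi : ℂ) * Complex.I / 5) + 1 = 0 := by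
  have h := congrArg (fun x : ℝ => (x : ℂ)) two_cos_seven_pi_div_five
  push_cast at h
  rw [Complex.two_cos] at h
  have e : (7 * (Real.pi : ℂ) / 5) * Complex.I = 7 * (Real.pi : ℂ) * Complex.I / 5 := by ring
  rw [neg_mul, e, Complex.exp_neg] at h
  have hne := Complex.exp_ne_zero (7 * (Real.pi : ℂ) * Complex.I / 5)
  push_cast
  generalize Complex.exp (7 * (Real.pi : ℂ) * Complex.I / 5) = w at *
  linear_combination w * h - mul_inv_cancel₀ hne

/-- The braid relation for `D = diag(1, w)` and its conjugate `F D F`, from the algebraic relations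
between the entries alone. -/
lemma braid_of_relations {s t w : ℂ} (hs : s ^ 2 = t) (ht : t ^ 2 + t = 1)
    (hw : w ^ 2 + t * w + 1 = 0) :
    let F : Matrix (Fin 2) (Fin 2) ℂ := !![t, s; s, -t]
    let D : Matrix (Fin 2) (Fin 2) ℂ := !![1, 0; 0, w]
    D * (F * D * F) * D = (F * D * F) * D * (F * D * F) := by
  intro F D
  ext i j
  fin_cases i <;> fin_cases j <;> simp [F, D, Matrix.mul_apply, Fin.sum_univ_two] <;> grind

/-- The Fibonacci single-qubit Yang–Baxter equation: `R₁ R₂ R₁ = R₂ R₁ R₂`. -/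
theorem fibonacci_yang_baxter : R1 * R2 * R1 = R2 * R1 * R2 := by
  have hs : ((phi ^ (-(1 : ℝ) / 2) : ℝ) : ℂ) ^ 2 = ((phi⁻¹ : ℝ) : ℂ) := by
    rw [← Complex.ofReal_pow, phi_rpow_sq]
  have ht : ((phi⁻¹ : ℝ) : ℂ) ^ 2 + ((phi⁻¹ : ℝ) : ℂ) = 1 := by
    exact_mod_cast phi_inv_sq_add
  have h := braid_of_relations hs ht exp_relation
  simp only [R2, R1, Fm, Matrix.smul_mul, Matrix.mul_smul] at h ⊢
  rw [h]
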